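/- arXiv:2405.15407 — 2 statements merged into one kernel-verified Lean document; each statement's English description precedes it below -/
import Mathlib

section
/- Let E be a real inner product space, let F, f : E → ℝ be differentiable with F convex and ∇F L-Lipschitz for some L > 0, let u, w ∈ E, let ρ, γ, ε > 0, V₁ ≥ 0, V₂ ≥ 0, C ≥ 0, β ∈ [0,1] be reals, and let H, H_max be natural numbers with 1 ≤ H ≤ H_max. Define J(x) = f(x) + (ρ/2)‖x − u‖² and 𝕁(x) = F(x) + (ρ/2)‖x − u‖², and the iterates v 0 = u, v (h+1) = v h − γ•∇J(v h) for h < H. Assume: (i) the gradient of 𝕁 is L-Lipschitz; (ii) ‖∇J(x)‖² ≤ V₂ for all x ∈ E; (iii) ⟪∇𝕁(v h), ∇J(v h)⟫ ≥ ε·‖∇F(v h)‖² for all h < H; (iv) ‖∇F(w)‖² ≤ V₁; (v) ‖u − w‖ ≤ C. Let w⁺ = (1−β)•w + β•(v H). Then F(w⁺) − F(w) ≤ −β·γ·ε·Σ_{h=0}^{H−1}‖∇F(v h)‖² + (L/2 + ρ·H_max + ρ·H_max²/2)·γ²·H_max·β·V₂ + β·√V₁·C + β·(L/2 + ρ)·C².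 -/
/-!
By convexity, `F wplus - F w ≤ β (F (v H) - F w)`, so it suffices to bound `F (v H) - F w`.
Since `F ≤ Jc` with equality at `u = v 0`, this is at most
`(Jc (v H) - Jc (v 0)) + (F u - F w)`. The quadratic upper bound for functions with Lipschitz
gradient (`le_quadratic_of_lipschitz_gradient`) applied to `Jc` at each local step, together with
`hip` and `hgradJ`, telescopes to a bound on the first difference; applied to `F` at `w`, together
with Cauchy-Schwarz, it bounds the second. The remaining `ρ` terms of the claim are nonnegative
slack.
-/

open RealInnerProductSpace

/-- The descent lemma: a differentiable function with `L`-Lipschitz gradient lies below its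
tangent plus `L / 2` times the squared distance. -/
theorem le_quadratic_of_lipschitz_gradient
    {E : Type*} [NormedAddCommGroup E] [InnerProductSpace ℝ E] [CompleteSpace E]
    {G : E → ℝ} (hG : Differentiable ℝ G) {L : ℝ} (hL : 0 ≤ L)
    (hlip : LipschitzWith L.toNNReal (gradient G)) (x d : E) :
    G (x + d) ≤ G x + ⟪gradient G x, d⟫ + L / 2 * ‖d‖ ^ 2 := by
  -- The gap between the two sides along the segment from `x` to `x + d` is antitone in `t`.
  let g : ℝ → ℝ := fun t => G (x + t • d) - t * ⟪gradient G x, d⟫ - t ^ 2 * (L / 2 * ‖d‖ ^ 2)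
  have hg : ∀ t, HasDerivAt g
      (⟪gradient G (x + t • d), d⟫ - ⟪gradient G x, d⟫ - 2 * t * (L / 2 * ‖d‖ ^ 2)) t := by
    intro t
    have hline : HasDerivAt (fun s : ℝ => x + s • d) d t := by
      simpa using ((hasDerivAt_id t).smul_const d).const_add x
    have hGline : HasDerivAt (fun s : ℝ => G (x + s • d)) ⟪gradient G (x + t • d), d⟫ t := by
      have h := (hG (x + t • d)).hasGradientAt.hasFDerivAt.comp_hasDerivAt t hline
      simpa [Function.comp_def] using h
    have hlin : HasDerivAt (fun s : ℝ => s * ⟪gradient G x, d⟫) ⟪gradient G x, d⟫ t := by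
      simpa using (hasDerivAt_id t).mul_const ⟪gradient G x, d⟫
    have hquad : HasDerivAt (fun s : ℝ => s ^ 2 * (L / 2 * ‖d‖ ^ 2))
        (2 * t * (L / 2 * ‖d‖ ^ 2)) t := by
      simpa using (hasDerivAt_pow 2 t).mul_const (L / 2 * ‖d‖ ^ 2)
    exact (hGline.sub hlin).sub hquad
  have hanti : AntitoneOn g (Set.Icc 0 1) := by
    apply antitoneOn_of_deriv_nonpos (convex_Icc 0 1)
      (fun t _ => (hg t).continuousAt.continuousWithinAt)
      (fun t _ => (hg t).differentiableAt.differentiableWithinAt)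
    intro t ht
    rw [interior_Icc] at ht
    rw [(hg t).deriv, ← inner_sub_left]
    have hcs := real_inner_le_norm (gradient G (x + t • d) - gradient G x) d
    have hl : ‖gradient G (x + t • d) - gradient G x‖ ≤ L * (t * ‖d‖) := by
      have h := hlip.norm_sub_le (x + t • d) x
      rwa [Real.coe_toNNReal _ hL, add_sub_cancel_left, norm_smul, Real.norm_eq_abs,
        abs_of_pos ht.1] at h
    have := mul_le_mul_of_nonneg_right hl (norm_nonneg d)
    nlinarith
  have h := hanti (Set.left_mem_Icc.2 zero_le_one) (Set.right_mem_Icc.2 zero_le_one) zero_le_one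
  simp only [g, one_smul, zero_smul, add_zero] at h
  linarith

/-- Deterministic per-epoch cluster-update inequality (equation mid3). -/
theorem per_epoch_cluster_update_bound
    {E : Type*} [NormedAddCommGroup E] [InnerProductSpace ℝ E] [CompleteSpace E]
    (F f : E → ℝ) (hF : Differentiable ℝ F) (hf : Differentiable ℝ f)
    (hFconv : ConvexOn ℝ Set.univ F)
    (L : ℝ) (hL : 0 < L) (hlipF : LipschitzWith L.toNNReal (gradient F))
    (u w : E) (ρ γ ε V₁ V₂ C β : ℝ)
    (hρ : 0 < ρ) (hγ : 0 < γ) (hε : 0 < ε)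
    (hV₁ : 0 ≤ V₁) (hV₂ : 0 ≤ V₂) (hC : 0 ≤ C) (hβ : β ∈ Set.Icc (0 : ℝ) 1)
    (H Hmax : ℕ) (hH1 : 1 ≤ H) (hHmax : H ≤ Hmax)
    (J Jc : E → ℝ)
    (hJ : ∀ x : E, J x = f x + (ρ / 2) * ‖x - u‖ ^ 2)
    (hJc : ∀ x : E, Jc x = F x + (ρ / 2) * ‖x - u‖ ^ 2)
    (v : ℕ → E) (hv0 : v 0 = u)
    (hstep : ∀ h < H, v (h + 1) = v h - γ • gradient J (v h))
    (hlipJc : LipschitzWith L.toNNReal (gradient Jc))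
    (hgradJ : ∀ x : E, ‖gradient J x‖ ^ 2 ≤ V₂)
    (hip : ∀ h < H, ⟪gradient Jc (v h), gradient J (v h)⟫ ≥ ε * ‖gradient F (v h)‖ ^ 2)
    (hgradFw : ‖gradient F w‖ ^ 2 ≤ V₁)
    (huw : ‖u - w‖ ≤ C)
    (wplus : E) (hwplus : wplus = (1 - β) • w + β • v H) :
    F wplus - F w ≤
      -(β * γ * ε) * ∑ h ∈ Finset.range H, ‖gradient F (v h)‖ ^ 2
        + (L / 2 + ρ * (Hmax : ℝ) + ρ * (Hmax : ℝ) ^ 2 / 2) * γ ^ 2 * (Hmax : ℝ) * β * V₂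
        + β * Real.sqrt V₁ * C
        + β * (L / 2 + ρ) * C ^ 2 := by
  obtain ⟨hβ0, hβ1⟩ := hβ
  have hJcd : Differentiable ℝ Jc := by
    rw [funext hJc]
    exact hF.add (((differentiable_id.sub_const u).norm_sq ℝ).const_mul (ρ / 2))
  have hlocal : ∀ n ≤ H, Jc (v n) ≤ Jc (v 0)
      - γ * ε * ∑ h ∈ Finset.range n, ‖gradient F (v h)‖ ^ 2 + n * (L / 2 * γ ^ 2 * V₂) := by
    intro n
    induction n with
    | zero => simp
    | succ n ih =>
      intro hn
      have hprev := ih (by omega)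
      have hd := le_quadratic_of_lipschitz_gradient hJcd hL.le hlipJc (v n)
        (-(γ • gradient J (v n)))
      rw [← sub_eq_add_neg, ← hstep n (by omega), inner_neg_right, real_inner_smul_right,
        norm_neg, norm_smul, mul_pow, Real.norm_eq_abs, sq_abs] at hd
      have hi := mul_le_mul_of_nonneg_left (hip n (by omega)) hγ.le
      have hV := mul_le_mul_of_nonneg_left (hgradJ (v n)) (by positivity : 0 ≤ L / 2 * γ ^ 2)
      rw [Finset.sum_range_succ]
      push_cast
      linarith
  have hJcH := hlocal H le_rfl
  have hFH : F (v H) ≤ Jc (v H) := by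
    rw [hJc]
    have : 0 ≤ ρ / 2 * ‖v H - u‖ ^ 2 := by positivity
    linarith
  have hJc0 : Jc (v 0) = F u := by simp [hJc, hv0]
  have hFu : F u ≤ F w + Real.sqrt V₁ * C + L / 2 * C ^ 2 := by
    have hd := le_quadratic_of_lipschitz_gradient hF hL.le hlipF w (u - w)
    rw [add_sub_cancel] at hd
    have hcs := real_inner_le_norm (gradient F w) (u - w)
    have hm : ‖gradient F w‖ * ‖u - w‖ ≤ Real.sqrt V₁ * C :=
      mul_le_mul (Real.le_sqrt_of_sq_le hgradFw) huw (norm_nonneg _) (Real.sqrt_nonneg _)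
    have hsq : L / 2 * ‖u - w‖ ^ 2 ≤ L / 2 * C ^ 2 := by gcongr
    linarith
  have hconv : F wplus ≤ (1 - β) * F w + β * F (v H) := by
    rw [hwplus]
    exact hFconv.2 (Set.mem_univ _) (Set.mem_univ _) (by linarith) hβ0 (by ring)
  have hHm : (H : ℝ) * (L / 2 * γ ^ 2 * V₂) ≤ Hmax * (L / 2 * γ ^ 2 * V₂) := by gcongr
  have hmain : F (v H) - F w ≤ -(γ * ε * ∑ h ∈ Finset.range H, ‖gradient F (v h)‖ ^ 2)
      + Hmax * (L / 2 * γ ^ 2 * V₂) + Real.sqrt V₁ * C + L / 2 * C ^ 2 := by linarith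
  have hβmain := mul_le_mul_of_nonneg_left hmain hβ0
  have hslack₁ : 0 ≤ (ρ * (Hmax : ℝ) + ρ * (Hmax : ℝ) ^ 2 / 2) * γ ^ 2 * (Hmax : ℝ) * β * V₂ := by
    positivity
  have hslack₂ : 0 ≤ β * ρ * C ^ 2 := by positivity
  linarith
end

section
/- Let E be a real inner product space, let F, f : E → ℝ be differentiable with F convex and ∇F L-Lipschitz for some L > 0, let u, w ∈ E, let ρ, γ, ε > 0, V₁ ≥ 0, V₂ ≥ 0, C ≥ 0 be reals, let β ∈ (0,1], and let H, H_max be natural numbers with 1 ≤ H ≤ H_max. Define J(x) = f(x) + (ρ/2)‖x − u‖² and 𝕁(x) = F(x) + (ρ/2)‖x − u‖², and the iterates v 0 = u, v (h+1) = v h − γ•∇J(v h) for h < H. Assume: (i) the gradient of 𝕁 is L-Lipschitz; (ii) ‖∇J(x)‖² ≤ V₂ for all x ∈ E; (iii) ⟪∇𝕁(v h), ∇J(v h)⟫ ≥ ε·‖∇F(v h)‖² for all h < H; (iv) ‖∇F(w)‖² ≤ V₁; (v) ‖u − w‖ ≤ C. Let w⁺ = (1−β)•w + β•(v H). Then Σ_{h=0}^{H−1}‖∇F(v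 h)‖² ≤ (F(w) − F(w⁺))/(β·γ·ε) + ((L/2 + ρ·H_max + ρ·H_max²/2)·γ·H_max·V₂)/ε + (√V₁·C)/(γ·ε) + ((L/2 + ρ)·C²)/(γ·ε). -/
open RealInnerProductSpace

/-!
Convexity gives `F w - F wplus ≥ β (F w - F (v H))`, so it suffices to bound
`γ ε ∑ ‖∇F (v h)‖²` by `F w - F (v H)` plus error terms. The descent lemma
(`descent_of_lipschitz_gradient`) for the regularized objective `Jc`, applied to each local step
and telescoped (`telescoped_descent`), bounds this sum by `Jc u - Jc (v H) + H L γ² V₂ / 2`. The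
regularizer vanishes at `u` and is nonnegative at `v H`, so `Jc u - Jc (v H) ≤ F u - F (v H)`.
Finally the descent lemma for `F` from `w` to `u` and Cauchy–Schwarz give
`F u ≤ F w + √V₁ C + L C² / 2`. The terms in `ρ` on the right-hand side are pure slack.
-/

/-- Descent lemma: a function with `L`-Lipschitz gradient lies below its quadratic upper model. -/
lemma descent_of_lipschitz_gradient
    {E : Type*} [NormedAddCommGroup E] [InnerProductSpace ℝ E] [CompleteSpace E]
    {g : E → ℝ} (hg : Differentiable ℝ g) {L : ℝ} (hL : 0 < L)
    (hlip : LipschitzWith L.toNNReal (gradient g)) (x d : E) :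
    g (x + d) ≤ g x + ⟪gradient g x, d⟫ + L / 2 * ‖d‖ ^ 2 := by
  -- The gap between `g` and the model along the segment has nonpositive derivative.
  let φ : ℝ → ℝ := fun t => g (x + t • d) - t * ⟪gradient g x, d⟫ - L / 2 * ‖d‖ ^ 2 * t ^ 2
  have hφ : ∀ t, HasDerivAt φ
      (⟪gradient g (x + t • d), d⟫ - ⟪gradient g x, d⟫ - L * ‖d‖ ^ 2 * t) t := by
    intro t
    have hline : HasDerivAt (fun t : ℝ => x + t • d) d t := by
      simpa using ((hasDerivAt_id t).smul_const d).const_add x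
    have h1 := (hg (x + t • d)).hasGradientAt.hasFDerivAt.comp_hasDerivAt t hline
    have h2 := (hasDerivAt_id t).mul_const ⟪gradient g x, d⟫
    have h3 := ((hasDerivAt_id t).pow 2).const_mul (L / 2 * ‖d‖ ^ 2)
    refine ((h1.sub h2).sub h3).congr_deriv ?_
    simp
    ring
  have hanti : AntitoneOn φ (Set.Icc 0 1) := by
    refine antitoneOn_of_deriv_nonpos (convex_Icc 0 1)
      (fun t _ => (hφ t).continuousAt.continuousWithinAt)
      (fun t _ => (hφ t).differentiableAt.differentiableWithinAt) fun t ht => ?_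
    rw [interior_Icc] at ht
    rw [(hφ t).deriv, ← inner_sub_left]
    have h1 := real_inner_le_norm (gradient g (x + t • d) - gradient g x) d
    have h2 := hlip.dist_le_mul (x + t • d) x
    rw [dist_eq_norm, dist_eq_norm, add_sub_cancel_left, norm_smul, Real.coe_toNNReal _ hL.le,
      Real.norm_of_nonneg ht.1.le] at h2
    nlinarith [mul_le_mul_of_nonneg_right h2 (norm_nonneg d)]
  have h := hanti (by simp : (0 : ℝ) ∈ Set.Icc 0 1) (by simp : (1 : ℝ) ∈ Set.Icc 0 1) zero_le_one
  simp only [φ, one_smul, zero_smul, add_zero] at h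
  linarith

/-- Descent along `n` inexact gradient steps `v (h + 1) = v h - γ • d h`, whose directions have
squared norm at most `V` and correlate with the gradient of `g` by at least `a h`. -/
lemma telescoped_descent
    {E : Type*} [NormedAddCommGroup E] [InnerProductSpace ℝ E] [CompleteSpace E]
    {g : E → ℝ} (hg : Differentiable ℝ g) {L : ℝ} (hL : 0 < L)
    (hlip : LipschitzWith L.toNNReal (gradient g)) {γ V : ℝ} (hγ : 0 < γ)
    (v d : ℕ → E) (a : ℕ → ℝ) (n : ℕ)
    (hstep : ∀ h < n, v (h + 1) = v h - γ • d h)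
    (hd : ∀ h, ‖d h‖ ^ 2 ≤ V) (ha : ∀ h < n, a h ≤ ⟪gradient g (v h), d h⟫) :
    g (v n) + γ * ∑ h ∈ Finset.range n, a h ≤ g (v 0) + n * (L / 2 * γ ^ 2 * V) := by
  induction n with
  | zero => simp
  | succ n ih =>
    have ih' := ih (fun h hh => hstep h (by omega)) (fun h hh => ha h (by omega))
    have hdesc := descent_of_lipschitz_gradient hg hL hlip (v n) (-(γ • d n))
    rw [← sub_eq_add_neg, ← hstep n (by omega), inner_neg_right, real_inner_smul_right, norm_neg,
      norm_smul, Real.norm_of_nonneg hγ.le, mul_pow] at hdesc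
    have h1 := mul_le_mul_of_nonneg_left (ha n (by omega)) hγ.le
    have h2 := mul_le_mul_of_nonneg_left (hd n) (by positivity : 0 ≤ L / 2 * γ ^ 2)
    rw [Finset.sum_range_succ]
    push_cast
    linarith

/-- Rearranged per-epoch bound (equation mid4): the accumulated squared gradient
norms of the cluster objective along the client's local iterates are bounded by
the one-step decrease of `F` at the cluster model plus constant error terms. -/
theorem per_epoch_gradient_sum_bound
    {E : Type*} [NormedAddCommGroup E] [InnerProductSpace ℝ E] [CompleteSpace E]
    (F f : E → ℝ) (hF : Differentiable ℝ F) (hf : Differentiable ℝ f)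
    (hFconv : ConvexOn ℝ Set.univ F)
    (L : ℝ) (hL : 0 < L) (hlipF : LipschitzWith L.toNNReal (gradient F))
    (u w : E) (ρ γ ε V₁ V₂ C β : ℝ)
    (hρ : 0 < ρ) (hγ : 0 < γ) (hε : 0 < ε)
    (hV₁ : 0 ≤ V₁) (hV₂ : 0 ≤ V₂) (hC : 0 ≤ C) (hβ : β ∈ Set.Ioc (0 : ℝ) 1)
    (H Hmax : ℕ) (hH1 : 1 ≤ H) (hHmax : H ≤ Hmax)
    (J Jc : E → ℝ)
    (hJ : ∀ x : E, J x = f x + (ρ / 2) * ‖x - u‖ ^ 2)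
    (hJc : ∀ x : E, Jc x = F x + (ρ / 2) * ‖x - u‖ ^ 2)
    (v : ℕ → E) (hv0 : v 0 = u)
    (hstep : ∀ h < H, v (h + 1) = v h - γ • gradient J (v h))
    (hlipJc : LipschitzWith L.toNNReal (gradient Jc))
    (hgradJ : ∀ x : E, ‖gradient J x‖ ^ 2 ≤ V₂)
    (hip : ∀ h < H, ⟪gradient Jc (v h), gradient J (v h)⟫ ≥ ε * ‖gradient F (v h)‖ ^ 2)
    (hgradFw : ‖gradient F w‖ ^ 2 ≤ V₁)
    (huw : ‖u - w‖ ≤ C)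
    (wplus : E) (hwplus : wplus = (1 - β) • w + β • v H) :
    ∑ h ∈ Finset.range H, ‖gradient F (v h)‖ ^ 2 ≤
      (F w - F wplus) / (β * γ * ε)
        + ((L / 2 + ρ * (Hmax : ℝ) + ρ * (Hmax : ℝ) ^ 2 / 2) * γ * (Hmax : ℝ) * V₂) / ε
        + (Real.sqrt V₁ * C) / (γ * ε)
        + ((L / 2 + ρ) * C ^ 2) / (γ * ε) := by
  obtain ⟨hβ0, hβ1⟩ := hβ
  have hJcd : Differentiable ℝ Jc := by
    rw [funext hJc]
    exact hF.add ((((differentiable_id.sub_const u).norm_sq ℝ)).const_mul _)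
  have htel := telescoped_descent hJcd hL hlipJc hγ v (fun h => gradient J (v h))
    (fun h => ε * ‖gradient F (v h)‖ ^ 2) H hstep (fun h => hgradJ _) hip
  rw [← Finset.mul_sum, hv0, hJc u, hJc (v H), sub_self, norm_zero] at htel
  have hreg : 0 ≤ ρ / 2 * ‖v H - u‖ ^ 2 := by positivity
  have hFu := descent_of_lipschitz_gradient hF hL hlipF w (u - w)
  rw [add_sub_cancel] at hFu
  have hcs : ⟪gradient F w, u - w⟫ ≤ √V₁ * C :=
    (real_inner_le_norm _ _).trans
      (mul_le_mul (Real.le_sqrt_of_sq_le hgradFw) huw (norm_nonneg _) (Real.sqrt_nonneg _))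
  have hsq : L / 2 * ‖u - w‖ ^ 2 ≤ L / 2 * C ^ 2 := by gcongr
  have hconv : F wplus ≤ (1 - β) * F w + β * F (v H) := by
    rw [hwplus]
    exact hFconv.2 (Set.mem_univ _) (Set.mem_univ _) (by linarith) hβ0.le (by ring)
  have hdec : F w - F (v H) ≤ (F w - F wplus) / β := by
    rw [le_div_iff₀ hβ0]
    linarith
  have hHm : (H : ℝ) * (L / 2 * γ ^ 2 * V₂) ≤ Hmax * (L / 2 * γ ^ 2 * V₂) := by gcongr
  have hs1 : 0 ≤ (ρ * (Hmax : ℝ) + ρ * (Hmax : ℝ) ^ 2 / 2) * γ ^ 2 * Hmax * V₂ := by positivity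
  have hs2 : 0 ≤ ρ * C ^ 2 := by positivity
  -- All estimates combined, before dividing by `γ * ε`.
  have hmain : (∑ h ∈ Finset.range H, ‖gradient F (v h)‖ ^ 2) * (γ * ε) ≤
      (F w - F wplus) / β
        + (L / 2 + ρ * (Hmax : ℝ) + ρ * (Hmax : ℝ) ^ 2 / 2) * γ ^ 2 * Hmax * V₂
        + √V₁ * C + (L / 2 + ρ) * C ^ 2 := by
    linarith
  rw [← le_div_iff₀ (by positivity)] at hmain
  refine hmain.trans_eq ?_
  field_simp
end
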